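/- arXiv:1205.2946 — 2 statements merged into one kernel-verified Lean document; each statement's English description precedes it below -/
import Mathlib

section
/- Let (E₀⁺,E₁⁺,E₁⁻,K₀,K₁) be a U'_q(L(sl₂))-module structure on a complex vector space V and let s ∈ ℂ∖{0}. Then the operators x = −q^{−1}(q−q^{−1})²(sE₀⁺ + s^{−1}E₁⁻K₁), y = s^{−1}E₁⁺, k = sK₀ satisfy the augmented TD-algebra relations with (ε,ε*) = (1,0): k is invertible, kxk^{−1} = q²x, kyk^{−1} = q^{−2}y, [x,[x,[x,y]_q]_{q^{−1}}] = −δk^{−2}x², and [y,[y,[y,x]_q]_{q^{−1}}] = δy²k^{−2}, where δ = −(q−q^{−1})(q²−q^{−2})(q³−q^{−3})q⁴. -/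
/-!
Write `A = E₀⁺`, `E = E₁⁺`, `F = E₁⁻K₁` and `K = K₁²`. The module relations give
`AF = q²FA`, `KA = q⁻⁴AK`, `KF = q⁻⁴FK`, `KE = q⁴EK` and `qEF - q⁻¹FE = q(q - q⁻¹)⁻¹(K - 1)`.

In both cubic relations write `x = c(sA + s⁻¹F)`; the term `-1` of `K - 1` contributes nothing,
because `[X, [X, 1]_t] = 0` (`brk_brkq_comb`). For the relation that is cubic in `y`, the `A`-part vanishes by the `q`-Serre
relation, and the `F`-part is a multiple of `[E, [E, K]_{q⁻¹}]`, which is a multiple of `E²K`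
(`cubic_of_qcomm'`).

For the relation that is cubic in `x`, the two `q`-brackets may be interchanged
(`brk_brkq_swap`), so the innermost bracket is `[x, y]_{q⁻¹}`. It is a combination of `K - 1`,
which contributes a multiple of `Kx²` (`cubic_of_qcomm`), and of `W = [A, E]_{q⁻¹}`. The latter
satisfies `FW = WF - (q² + 1)A` (`F_mul_W`); together with `AF = q²FA` and the `q`-Serre relation
`[A, [A, W]_q] = 0` this makes `[x, [x, W]_q]` vanish (`cubic_W`).
-/

open scoped TensorProduct

noncomputable section

/-- The `q`-integer `[t] = (q^t - q^(-t))/(q - q⁻¹)`. -/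
def qnum (q : ℂ) (t : ℤ) : ℂ := (q ^ t - q ^ (-t)) / (q - q⁻¹)

/-- The `q`-factorial `[t]! = [t][t-1]⋯[1]`. -/
def qfac (q : ℂ) (t : ℕ) : ℂ := ∏ k ∈ Finset.range t, qnum q ((k : ℤ) + 1)

/-- Commutator `[X,Y] = XY - YX`. -/
def brk {V : Type*} [AddCommGroup V] [Module ℂ V] (X Y : Module.End ℂ V) :
    Module.End ℂ V := X * Y - Y * X

/-- `q`-commutator `[X,Y]_t = t XY - t⁻¹ YX`. -/
def brkq {V : Type*} [AddCommGroup V] [Module ℂ V] (t : ℂ) (X Y : Module.End ℂ V) :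
    Module.End ℂ V := t • (X * Y) - t⁻¹ • (Y * X)

/-- A `U'_q(L(sl₂))`-module structure on a complex vector space `V`:
operators `(E₀⁺, E₁⁺, E₁⁻, K₀, K₁)` with `K₀, K₁` mutually inverse (hence invertible) and
the defining relations; `K₀ = K₁⁻¹` throughout. -/
structure IsUqpRep (q : ℂ) {V : Type*} [AddCommGroup V] [Module ℂ V]
    (E0 E1p E1m K0 K1 : Module.End ℂ V) : Prop where
  K0K1 : K0 * K1 = 1
  K1K0 : K1 * K0 = 1
  K0E0 : K0 * E0 = q ^ 2 • (E0 * K0)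
  K1E1p : K1 * E1p = q ^ 2 • (E1p * K1)
  K1E1m : K1 * E1m = (q ^ 2)⁻¹ • (E1m * K1)
  K1E0 : K1 * E0 = (q ^ 2)⁻¹ • (E0 * K1)
  K0E1p : K0 * E1p = (q ^ 2)⁻¹ • (E1p * K0)
  K0E1m : K0 * E1m = q ^ 2 • (E1m * K0)
  e1comm : E1p * E1m - E1m * E1p = (q - q⁻¹)⁻¹ • (K1 - K0)
  e0e1m : E0 * E1m = E1m * E0
  serre01 : brk E0 (brkq q⁻¹ E0 (brkq q E0 E1p)) = 0
  serre10 : brk E1p (brkq q⁻¹ E1p (brkq q E1p E0)) = 0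

/-- `K₀` of the evaluation module `V(ℓ,a)`: `K₀ vᵢ = q^(2i-ℓ) vᵢ`. -/
def evalK0 (q : ℂ) (ℓ : ℕ) : Module.End ℂ (Fin (ℓ + 1) → ℂ) :=
  (Matrix.diagonal fun i : Fin (ℓ + 1) => q ^ (2 * (i : ℤ) - ℓ)).mulVecLin

/-- `K₁` of the evaluation module `V(ℓ,a)`: `K₁ vᵢ = q^(ℓ-2i) vᵢ`. -/
def evalK1 (q : ℂ) (ℓ : ℕ) : Module.End ℂ (Fin (ℓ + 1) → ℂ) :=
  (Matrix.diagonal fun i : Fin (ℓ + 1) => q ^ ((ℓ : ℤ) - 2 * i)).mulVecLin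

/-- `E₀⁺` of the evaluation module `V(ℓ,a)`: `E₀⁺ vᵢ = a q [i+1] vᵢ₊₁`. -/
def evalE0 (q a : ℂ) (ℓ : ℕ) : Module.End ℂ (Fin (ℓ + 1) → ℂ) :=
  (Matrix.of fun j i : Fin (ℓ + 1) =>
    if (j : ℕ) = (i : ℕ) + 1 then a * q * qnum q ((i : ℤ) + 1) else 0).mulVecLin

/-- `E₁⁺` of the evaluation module `V(ℓ,a)`: `E₁⁺ vᵢ = [ℓ-i+1] vᵢ₋₁`. -/
def evalE1p (q : ℂ) (ℓ : ℕ) : Module.End ℂ (Fin (ℓ + 1) → ℂ) :=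
  (Matrix.of fun j i : Fin (ℓ + 1) =>
    if (i : ℕ) = (j : ℕ) + 1 then qnum q ((ℓ : ℤ) - (i : ℤ) + 1) else 0).mulVecLin

/-- `E₁⁻` of the evaluation module `V(ℓ,a)`: `E₁⁻ vᵢ = [i+1] vᵢ₊₁`. -/
def evalE1m (q : ℂ) (ℓ : ℕ) : Module.End ℂ (Fin (ℓ + 1) → ℂ) :=
  (Matrix.of fun j i : Fin (ℓ + 1) =>
    if (j : ℕ) = (i : ℕ) + 1 then qnum q ((i : ℤ) + 1) else 0).mulVecLin

/-- Irreducibility: the only subspaces invariant under all five operators are `⊥` and `⊤`. -/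
def IsIrred {V : Type*} [AddCommGroup V] [Module ℂ V]
    (E0 E1p E1m K0 K1 : Module.End ℂ V) : Prop :=
  ∀ W : Submodule ℂ V, (∀ v ∈ W, E0 v ∈ W) → (∀ v ∈ W, E1p v ∈ W) →
    (∀ v ∈ W, E1m v ∈ W) → (∀ v ∈ W, K0 v ∈ W) → (∀ v ∈ W, K1 v ∈ W) →
    W = ⊥ ∨ W = ⊤

/-- Type `(1,1)`: `K₀` is diagonalizable with all eigenvalues of the form `q^(2i-d)`,
`0 ≤ i ≤ d`, i.e. the corresponding eigenspaces span. -/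
def IsType11 (q : ℂ) {V : Type*} [AddCommGroup V] [Module ℂ V] (K0 : Module.End ℂ V) : Prop :=
  ∃ d : ℕ, ⨆ i : Fin (d + 1), Module.End.eigenspace K0 (q ^ (2 * (i : ℤ) - d)) = ⊤

section Helpers

variable {V : Type*} [AddCommGroup V] [Module ℂ V]

/-- The two `q`-brackets in the cubic `q`-Serre expression may be interchanged, as the operators
`[X, ·]_q` and `[X, ·]_{q⁻¹}` commute. -/
lemma brk_brkq_swap (q : ℂ) (X Y : Module.End ℂ V) :
    brk X (brkq q⁻¹ X (brkq q X Y)) = brk X (brkq q X (brkq q⁻¹ X Y)) := by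
  simp only [brk, brkq, mul_sub, sub_mul, smul_mul_assoc, mul_smul_comm, mul_assoc, inv_inv]
  module

/-- Linearity of the outer two brackets in the last argument, and `[X, [X, 1]_t] = 0`. -/
lemma brk_brkq_comb (t a b : ℂ) (X W K : Module.End ℂ V) :
    brk X (brkq t X (a • W + b • (K - 1))) =
      a • brk X (brkq t X W) + b • brk X (brkq t X K) := by
  simp only [brk, brkq, mul_sub, sub_mul, mul_add, add_mul, smul_mul_assoc, mul_smul_comm,
    mul_assoc, mul_one, one_mul]
  module

/-- The contribution of `K = K₁²` to the relation that is cubic in `x`. -/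
lemma cubic_of_qcomm (q : ℂ) (hq0 : q ≠ 0) (X K : Module.End ℂ V)
    (h : X * K = q ^ 4 • (K * X)) :
    brk X (brkq q X K) = ((q ^ 5 - q⁻¹) * (q ^ 4 - 1)) • (K * X ^ 2) := by
  have h' (Z : Module.End ℂ V) : X * (K * Z) = q ^ 4 • (K * (X * Z)) := by
    rw [← mul_assoc, h, smul_mul_assoc, mul_assoc]
  simp only [brk, brkq, mul_sub, sub_mul, smul_mul_assoc, mul_smul_comm, mul_assoc, pow_two,
    h, h']
  match_scalars
  field_simp

/-- The mirror image of `cubic_of_qcomm`, for an element `K` that `q`-commutes with `E` in the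
opposite order; the outcome is ordered with `K` on the right. -/
lemma cubic_of_qcomm' (q : ℂ) (hq0 : q ≠ 0) (E K : Module.End ℂ V)
    (h : K * E = q ^ 4 • (E * K)) :
    brk E (brkq q⁻¹ E K) = ((q ^ 5 - q⁻¹) * (q ^ 4 - 1)) • (E ^ 2 * K) := by
  simp only [brk, brkq, mul_sub, sub_mul, smul_mul_assoc, mul_smul_comm, mul_assoc, pow_two, h]
  match_scalars
  field_simp
  ring

/-- With `A = E₀⁺`, `E = E₁⁺`, `F = E₁⁻K₁` and `K = K₁²`, the operator `F` commutes with
`[A, E]_{q⁻¹}` up to a multiple of `A`: the terms `AK` produced by `[F, E]` cancel. -/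
lemma F_mul_W (q : ℂ) (hq0 : q ≠ 0) (hq : q ^ 2 - 1 ≠ 0) (A E F K : Module.End ℂ V)
    (hFA : F * A = (q ^ 2)⁻¹ • (A * F)) (hKA : K * A = (q ^ 4)⁻¹ • (A * K))
    (hFE : F * E = q ^ 2 • (E * F) - (q ^ 2 * (q - q⁻¹)⁻¹) • (K - 1)) :
    F * brkq q⁻¹ A E = brkq q⁻¹ A E * F - (q ^ 2 + 1) • A := by
  -- The primed relations rewrite right-associated words, moving `F` to the right.
  have hFA' (Z : Module.End ℂ V) : F * (A * Z) = (q ^ 2)⁻¹ • (A * (F * Z)) := by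
    rw [← mul_assoc, hFA, smul_mul_assoc, mul_assoc]
  have hFE' (Z : Module.End ℂ V) : F * (E * Z) =
      q ^ 2 • (E * (F * Z)) - (q ^ 2 * (q - q⁻¹)⁻¹) • (K * Z - Z) := by
    rw [← mul_assoc, hFE, sub_mul, smul_mul_assoc, smul_mul_assoc, mul_assoc, sub_mul, one_mul]
  have hd : q - q⁻¹ = (q ^ 2 - 1) / q := by field_simp
  simp only [brkq, mul_sub, sub_mul, smul_mul_assoc, mul_smul_comm, mul_assoc, hFA, hFA', hFE,
    hFE', hKA, mul_one, hd]
  match_scalars <;> field_simp <;> ring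

/-- `[x, [x, W]_q] = 0` for every combination `x` of `A` and `F`: the `A²`-part is the `q`-Serre
relation, and the other parts cancel by the commutation of `F` with `A` and `W`. -/
lemma cubic_W (q : ℂ) (hq0 : q ≠ 0) (a b : ℂ) (A F W : Module.End ℂ V)
    (hFA : F * A = (q ^ 2)⁻¹ • (A * F)) (hFW : F * W = W * F - (q ^ 2 + 1) • A)
    (hA : brk A (brkq q A W) = 0) :
    brk (a • A + b • F) (brkq q (a • A + b • F) W) = 0 := by
  -- The primed relations rewrite right-associated words, moving `F` to the right.
  have hFA' (Z : Module.End ℂ V) : F * (A * Z) = (q ^ 2)⁻¹ • (A * (F * Z)) := by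
    rw [← mul_assoc, hFA, smul_mul_assoc, mul_assoc]
  have hFW' (Z : Module.End ℂ V) : F * (W * Z) = W * (F * Z) - (q ^ 2 + 1) • (A * Z) := by
    rw [← mul_assoc, hFW, sub_mul, smul_mul_assoc, mul_assoc]
  have key : brk (a • A + b • F) (brkq q (a • A + b • F) W) =
      (a ^ 2) • brk A (brkq q A W) := by
    simp only [brk, brkq, mul_sub, sub_mul, mul_add, add_mul, smul_mul_assoc, mul_smul_comm,
      mul_assoc, hFA, hFA', hFW, hFW']
    match_scalars <;> field_simp <;> ring
  rw [key, hA, smul_zero]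

end Helpers

/-- the operators `x, y, k` built from a `U'_q(L(sl₂))`-module structure
satisfy the augmented TD-algebra relations with `(ε,ε*) = (1,0)`;
`k` is invertible with inverse `kinv = s⁻¹ K₁`. -/
theorem stmt3 (q : ℂ) (hq0 : q ≠ 0) (hq : ∀ n : ℕ, 0 < n → q ^ n ≠ 1)
    {V : Type*} [AddCommGroup V] [Module ℂ V]
    (E0 E1p E1m K0 K1 : Module.End ℂ V) (h : IsUqpRep q E0 E1p E1m K0 K1)
    (s : ℂ) (hs : s ≠ 0) :
    let x : Module.End ℂ V := (-q⁻¹ * (q - q⁻¹) ^ 2) • (s • E0 + s⁻¹ • (E1m * K1))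
    let y : Module.End ℂ V := s⁻¹ • E1p
    let k : Module.End ℂ V := s • K0
    let kinv : Module.End ℂ V := s⁻¹ • K1
    let δ : ℂ := -((q - q⁻¹) * (q ^ 2 - (q ^ 2)⁻¹) * (q ^ 3 - (q ^ 3)⁻¹) * q ^ 4)
    k * kinv = 1 ∧ kinv * k = 1 ∧
    k * x = q ^ 2 • (x * k) ∧
    k * y = (q ^ 2)⁻¹ • (y * k) ∧
    brk x (brkq q⁻¹ x (brkq q x y)) = (-δ) • (kinv ^ 2 * x ^ 2) ∧
    brk y (brkq q⁻¹ y (brkq q y x)) = δ • (y ^ 2 * kinv ^ 2) := by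
  intro x y k kinv δ
  obtain ⟨hK01, hK10, hK0A, hKE, hKM, hKA, hK0E, hK0M, hEM, hAM, hS1, hS2⟩ := h
  have hq2 : q ^ 2 - 1 ≠ 0 := sub_ne_zero.mpr (hq 2 two_pos)
  have hd : q - q⁻¹ = (q ^ 2 - 1) / q := by field_simp
  obtain ⟨F, hF⟩ : ∃ F : Module.End ℂ V, F = E1m * K1 := ⟨_, rfl⟩
  obtain ⟨c, hc⟩ : ∃ c : ℂ, c = -q⁻¹ * (q - q⁻¹) ^ 2 := ⟨_, rfl⟩
  have hxe : x = (c * s) • E0 + (c * s⁻¹) • F := by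
    simp only [x, hF, hc, smul_add, smul_smul]
  have hK0F : K0 * F = q ^ 2 • (F * K0) := by
    rw [hF, ← mul_assoc, hK0M, smul_mul_assoc, mul_assoc, mul_assoc, hK01, hK10]
  have hK1F : K1 * F = (q ^ 2)⁻¹ • (F * K1) := by
    rw [hF, ← mul_assoc, hKM, smul_mul_assoc]
  have hFA : F * E0 = (q ^ 2)⁻¹ • (E0 * F) := by
    rw [hF, mul_assoc, hKA, mul_smul_comm, ← mul_assoc, ← mul_assoc, hAM]
  have hFE : F * E1p = q ^ 2 • (E1p * F) - (q ^ 2 * (q - q⁻¹)⁻¹) • (K1 ^ 2 - 1) := by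
    have h1 : E1p * F = E1m * (E1p * K1) + (q - q⁻¹)⁻¹ • (K1 ^ 2 - 1) := by
      rw [hF, ← mul_assoc, sub_eq_iff_eq_add.mp hEM, add_mul, smul_mul_assoc, sub_mul, hK01,
        mul_assoc, pow_two, add_comm]
    rw [h1, hF, mul_assoc, hKE, mul_smul_comm]
    module
  have sq_comm (c : ℂ) (Z : Module.End ℂ V) (hZ : K1 * Z = c • (Z * K1)) :
      K1 ^ 2 * Z = (c ^ 2) • (Z * K1 ^ 2) := by
    rw [pow_two, mul_assoc, hZ, mul_smul_comm, ← mul_assoc, hZ, smul_mul_assoc, smul_smul,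
      mul_assoc, pow_two]
  have hKKA : K1 ^ 2 * E0 = (q ^ 4)⁻¹ • (E0 * K1 ^ 2) := by
    rw [sq_comm _ _ hKA]; congr 1; rw [inv_pow, ← pow_mul]
  have hKKF : K1 ^ 2 * F = (q ^ 4)⁻¹ • (F * K1 ^ 2) := by
    rw [sq_comm _ _ hK1F]; congr 1; rw [inv_pow, ← pow_mul]
  have hKKE : K1 ^ 2 * E1p = q ^ 4 • (E1p * K1 ^ 2) := by
    rw [sq_comm _ _ hKE, ← pow_mul]
  refine ⟨?_, ?_, ?_, ?_, ?_, ?_⟩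
  · simp only [k, kinv, smul_mul_assoc, mul_smul_comm, smul_smul, hK01, inv_mul_cancel₀ hs,
      one_smul]
  · simp only [k, kinv, smul_mul_assoc, mul_smul_comm, smul_smul, hK10, mul_inv_cancel₀ hs,
      one_smul]
  · simp only [k, hxe, smul_mul_assoc, mul_smul_comm, mul_add, add_mul, hK0A, hK0F]
    module
  · simp only [k, y, smul_mul_assoc, mul_smul_comm, hK0E]
    module
  · have hxK : x * K1 ^ 2 = q ^ 4 • (K1 ^ 2 * x) := by
      simp only [hxe, mul_add, add_mul, smul_mul_assoc, mul_smul_comm, hKKA, hKKF]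
      match_scalars <;> field_simp
    have hW := cubic_W q hq0 (c * s) (c * s⁻¹) E0 F (brkq q⁻¹ E0 E1p) hFA
      (F_mul_W q hq0 hq2 E0 E1p F (K1 ^ 2) hFA hKKA hFE)
      ((brk_brkq_swap q E0 E1p).symm.trans hS1)
    rw [← hxe] at hW
    have hinner : brkq q⁻¹ x y = c • brkq q⁻¹ E0 E1p +
        (-(c * s⁻¹ ^ 2 * q * (q - q⁻¹)⁻¹)) • (K1 ^ 2 - 1) := by
      simp only [hxe, y, brkq, mul_add, add_mul, smul_mul_assoc, mul_smul_comm, hFE]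
      match_scalars <;> field_simp <;> ring
    rw [brk_brkq_swap, hinner, brk_brkq_comb, hW, cubic_of_qcomm q hq0 x _ hxK]
    simp only [kinv, δ, smul_pow, smul_mul_assoc, smul_smul, smul_zero, zero_add]
    congr 1
    rw [hc, hd]
    field_simp
  · have hinner : brkq q y x = c • brkq q E1p E0 +
        (c * s⁻¹ ^ 2 * q * (q - q⁻¹)⁻¹) • (K1 ^ 2 - 1) := by
      simp only [hxe, y, brkq, mul_add, add_mul, smul_mul_assoc, mul_smul_comm, hFE]
      match_scalars <;> field_simp <;> ring
    have hy (Z : Module.End ℂ V) :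
        brk y (brkq q⁻¹ y Z) = (s⁻¹ ^ 2) • brk E1p (brkq q⁻¹ E1p Z) := by
      simp only [y, brk, brkq, mul_sub, sub_mul, smul_mul_assoc, mul_smul_comm]
      module
    rw [hinner, hy, brk_brkq_comb, hS2, cubic_of_qcomm' q hq0 _ _ hKKE]
    simp only [kinv, y, δ, smul_pow, smul_mul_assoc, mul_smul_comm, smul_smul, smul_zero,
      zero_add]
    congr 1
    rw [hc, hd]
    field_simp
end
end

section
/- Let V be a finite-dimensional irreducible U'_q(L(sl₂))-module of type (1,1). Then there exists a finite set Λ ⊆ ℂ∖{0} such that for every s ∈ ℂ∖{0} with s ∉ Λ, the only subspaces of V invariant under all of K₀, K₀^{−1}, E₁⁺, and E₀⁺ + s^{−2}E₁⁻K₁ are 0 and V. -/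
/-!
The weight spaces of `V` are the eigenspaces of `K₁` for `q^n`. By type `(1,1)` they span `V`, and
only finitely many are nonzero. The operators `e = E₁⁺`, `f = E₁⁻`, `K₁` give a `U_q(sl₂)`-module,
so `f^m : V_m → V_{-m}` and `e^m : V_{-m} → V_m` are injective (`Sl2.f_pow_inj`).

Put `u = s²` and `A = E₀⁺ + u⁻¹ E₁⁻K₁`, so `u A = u E₀⁺ + E₁⁻K₁`. On `V_m` the `m`-th power of `u A`
depends polynomially on `u`, and at `u = 0` it is a nonzero multiple of `f^m`, hence injective.
A determinant therefore shows that `A^m` is injective on `V_m` for all `m`, as long as `s` avoids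
a finite set which does not contain `0` (`exists_finset_inj`).

For such `s`, let `W` be invariant under `K₀`, `K₁`, `E₁⁺`, `A`. Then `A^m` embeds `W_m` into
`W_{-m}` and `e^m` embeds `W_{-m}` into `W_m`, so `e^m : W_{-m} → W_m` is onto. This forces
`f W ⊆ W` (`Sl2.f_mem`, `Sl2.f_stable`), hence also `E₀⁺ W ⊆ W`, and irreducibility of `V`
applies to `W`.
-/

open scoped TensorProduct

noncomputable section

section Helpers

variable {V : Type*} [AddCommGroup V] [Module ℂ V]

/-! ### The `U_q(sl₂)`-relations -/

/-- The relations of `U_q(sl₂)` on `V`, with `L` the inverse of `K`. The relations of `L` are listed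
separately so that the symmetry `(e, f, K, L) ↦ (f, e, L, K)` is visible. -/
structure Sl2 (q : ℂ) (e f K L : Module.End ℂ V) : Prop where
  KL : K * L = 1
  LK : L * K = 1
  Ke : K * e = q ^ 2 • (e * K)
  Kf : K * f = (q ^ 2)⁻¹ • (f * K)
  Le : L * e = (q ^ 2)⁻¹ • (e * L)
  Lf : L * f = q ^ 2 • (f * L)
  comm : e * f - f * e = (q - q⁻¹)⁻¹ • (K - L)

namespace Sl2

variable {q : ℂ} {e f K L : Module.End ℂ V}

lemma swap (h : Sl2 q e f K L) : Sl2 q f e L K where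
  KL := h.LK
  LK := h.KL
  Ke := h.Lf
  Kf := h.Le
  Le := h.Kf
  Lf := h.Ke
  comm := by
    rw [← neg_sub, h.comm, ← smul_neg, neg_sub]

end Sl2

/-! ### Weight vectors -/

lemma wt_raise {q : ℂ} (hq0 : q ≠ 0) {K e : Module.End ℂ V} (h : K * e = q ^ 2 • (e * K))
    {n : ℤ} {v : V} (hv : K v = q ^ n • v) : K (e v) = q ^ (n + 2) • e v := by
  have := LinearMap.congr_fun h v
  simp only [Module.End.mul_apply, LinearMap.smul_apply, hv, map_smul, smul_smul] at this
  rw [this, zpow_add₀ hq0, mul_comm]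
  norm_cast

lemma wt_lower {q : ℂ} (hq0 : q ≠ 0) {K f : Module.End ℂ V} (h : K * f = (q ^ 2)⁻¹ • (f * K))
    {n : ℤ} {v : V} (hv : K v = q ^ n • v) : K (f v) = q ^ (n - 2) • f v := by
  have := LinearMap.congr_fun h v
  simp only [Module.End.mul_apply, LinearMap.smul_apply, hv, map_smul, smul_smul] at this
  rw [this, zpow_sub₀ hq0, mul_comm]
  norm_cast

lemma wt_raise_pow {q : ℂ} (hq0 : q ≠ 0) {K e : Module.End ℂ V} (h : K * e = q ^ 2 • (e * K))
    {n : ℤ} {v : V} (hv : K v = q ^ n • v) (k : ℕ) :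
    K ((e ^ k) v) = q ^ (n + 2 * k) • (e ^ k) v := by
  induction k with
  | zero => simpa using hv
  | succ k ih =>
    rw [pow_succ', Module.End.mul_apply, wt_raise hq0 h ih]
    congr 2; push_cast; ring

lemma wt_lower_pow {q : ℂ} (hq0 : q ≠ 0) {K f : Module.End ℂ V}
    (h : K * f = (q ^ 2)⁻¹ • (f * K))
    {n : ℤ} {v : V} (hv : K v = q ^ n • v) (k : ℕ) :
    K ((f ^ k) v) = q ^ (n - 2 * k) • (f ^ k) v := by
  induction k with
  | zero => simpa using hv
  | succ k ih =>
    rw [pow_succ', Module.End.mul_apply, wt_lower hq0 h ih]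
    congr 2; push_cast; ring

lemma wt_inv {q : ℂ} (hq0 : q ≠ 0) {K L : Module.End ℂ V} (h : L * K = 1)
    {n : ℤ} {v : V} (hv : K v = q ^ n • v) : L v = q ^ (-n) • v := by
  have := LinearMap.congr_fun h v
  simp only [Module.End.mul_apply, hv, map_smul, Module.End.one_apply] at this
  rw [zpow_neg, eq_inv_smul_iff₀ (zpow_ne_zero _ hq0)]
  exact this

/-! ### Arithmetic of `q`-integers -/

lemma zpow_ne_one_of {q : ℂ} (hq : ∀ n : ℕ, 0 < n → q ^ n ≠ 1) {n : ℤ}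
    (hn : n ≠ 0) : q ^ n ≠ 1 := by
  intro h1
  have h2 := hq n.natAbs (Int.natAbs_pos.2 hn)
  rcases Int.natAbs_eq n with h3 | h3
  · rw [h3, zpow_natCast] at h1; exact h2 h1
  · rw [h3, zpow_neg, zpow_natCast, inv_eq_one] at h1; exact h2 h1

lemma zpow_inj_of {q : ℂ} (hq0 : q ≠ 0) (hq : ∀ n : ℕ, 0 < n → q ^ n ≠ 1) {m n : ℤ}
    (h : q ^ m = q ^ n) : m = n := by
  by_contra hne
  refine zpow_ne_one_of hq (sub_ne_zero.2 hne) ?_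
  rw [zpow_sub₀ hq0, h, div_self (zpow_ne_zero _ hq0)]

lemma q_sub_ne {q : ℂ} (hq0 : q ≠ 0) (hq : ∀ n : ℕ, 0 < n → q ^ n ≠ 1) : q - q⁻¹ ≠ 0 := by
  intro h
  have := zpow_inj_of hq0 hq (m := 1) (n := -1) (by simpa [sub_eq_zero] using h)
  omega

lemma qnum_ne {q : ℂ} (hq0 : q ≠ 0) (hq : ∀ n : ℕ, 0 < n → q ^ n ≠ 1) {n : ℤ} (hn : n ≠ 0) :
    qnum q n ≠ 0 := by
  refine div_ne_zero (fun h => ?_) (q_sub_ne hq0 hq)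
  have := zpow_inj_of hq0 hq (sub_eq_zero.1 h)
  omega

lemma qnum_rec {q : ℂ} (hq0 : q ≠ 0) (hq : ∀ n : ℕ, 0 < n → q ^ n ≠ 1) (k n : ℤ) :
    qnum q (k + 2) * qnum q (n - k - 1)
      = qnum q (k + 1) * qnum q (n - k) + qnum q (n - 2 * (k + 1)) := by
  have h1 := q_sub_ne hq0 hq
  have hk : q ^ k ≠ 0 := zpow_ne_zero _ hq0
  have hn : q ^ n ≠ 0 := zpow_ne_zero _ hq0
  have e1 : n - 2 * (k + 1) = n - k - k - 1 - 1 := by ring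
  have e2 : k + 2 = k + 1 + 1 := by ring
  have h2 : q ^ 2 - 1 ≠ 0 := sub_ne_zero.2 (hq 2 (by norm_num))
  rw [e1, e2]
  simp only [qnum, zpow_neg, zpow_sub₀ hq0, zpow_add₀ hq0, zpow_one]
  generalize q ^ k = x at *
  generalize q ^ n = y at *
  field_simp
  ring

/-! ### Commuting `e` past powers of `f`, and its consequences -/

namespace Sl2

variable {q : ℂ} {e f K L : Module.End ℂ V}

lemma comm_apply (hq0 : q ≠ 0) (h : Sl2 q e f K L) {n : ℤ} {v : V} (hv : K v = q ^ n • v) :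
    e (f v) = f (e v) + qnum q n • v := by
  have := LinearMap.congr_fun h.comm v
  simp only [LinearMap.sub_apply, Module.End.mul_apply, LinearMap.smul_apply, hv,
    wt_inv hq0 h.LK hv, ← sub_smul, smul_smul] at this
  rw [← sub_eq_iff_eq_add', this, qnum, div_eq_inv_mul]

lemma comm_pow (hq0 : q ≠ 0) (hq : ∀ n : ℕ, 0 < n → q ^ n ≠ 1) (h : Sl2 q e f K L) {n : ℤ}
    {v : V} (hv : K v = q ^ n • v) (k : ℕ) :
    e ((f ^ (k + 1)) v) = (f ^ (k + 1)) (e v) + (qnum q (k + 1) * qnum q (n - k)) • (f ^ k) v := by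
  induction k with
  | zero =>
    have h1 : qnum q 1 = 1 := by simp [qnum, div_self (q_sub_ne hq0 hq)]
    simpa [h1] using h.comm_apply hq0 hv
  | succ k ih =>
    rw [pow_succ' f (k + 1), Module.End.mul_apply,
      h.comm_apply hq0 (wt_lower_pow hq0 h.Kf hv (k + 1)), ih, map_add, map_smul,
      ← Module.End.mul_apply f (f ^ k), ← pow_succ', Module.End.mul_apply, add_assoc, ← add_smul]
    have := qnum_rec hq0 hq k n
    congr 2
    push_cast
    rw [show (k : ℤ) + 1 + 1 = k + 2 by ring, show n - ((k : ℤ) + 1) = n - k - 1 by ring, this]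

/-- `f^n` is injective on the weight space of weight `n`. Downward induction on `n`: if `f^n v = 0`
then `f^(n+2) (e v) = 0`, so `e v = 0`, and on a highest weight vector each step of `f^n` can be
undone by `e`. -/
lemma f_pow_inj (hq0 : q ≠ 0) (hq : ∀ n : ℕ, 0 < n → q ^ n ≠ 1) (h : Sl2 q e f K L) {N : ℕ}
    (hN : ∀ n : ℤ, (N : ℤ) < n → ∀ v, K v = q ^ n • v → v = 0) (j : ℕ) :
    ∀ n : ℕ, N < n + j → ∀ v : V, K v = q ^ (n : ℤ) • v → (f ^ n) v = 0 → v = 0 := by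
  induction j with
  | zero => exact fun n hn v hv _ => hN n (by omega) v hv
  | succ j ih =>
    intro n hn v hv hfv
    have hev : e v = 0 := by
      refine ih (n + 2) (by omega) (e v) ?_ ?_
      · rw [wt_raise hq0 h.Ke hv]; norm_cast
      · have h1 := h.comm_pow hq0 hq hv (n + 1)
        rw [pow_succ' f (n + 1), pow_succ' f n] at h1
        simp only [Module.End.mul_apply, hfv, map_zero, smul_zero, add_zero] at h1
        rw [pow_succ' f (n + 1), pow_succ' f n]
        simpa only [Module.End.mul_apply] using h1.symm
    have key : ∀ k : ℕ, k ≤ n → (f ^ k) v = 0 → v = 0 := by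
      intro k
      induction k with
      | zero => intro _ h0; simpa using h0
      | succ k ihk =>
        intro hk h0
        refine ihk (by omega) ?_
        have h1 := h.comm_pow hq0 hq hv k
        rw [h0, hev, map_zero, map_zero, zero_add, eq_comm, smul_eq_zero] at h1
        refine h1.resolve_left (mul_ne_zero (qnum_ne hq0 hq ?_) (qnum_ne hq0 hq ?_)) <;> omega
    exact key n le_rfl hfv

/-- Let `W` be `e`-stable such that `e^n` maps its part of weight `-n` onto its part of weight
`n`, for all `n ≥ 0`. Then `f` maps the parts of weight `±n` into `W`. The downward induction
uses `e^(n+2) f w = f e^(n+2) w + c e^(n+1) w` for `w` of weight `-n`, where `e^(n+2) w` has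
weight `n + 4`. -/
lemma f_mem (hq0 : q ≠ 0) (hq : ∀ n : ℕ, 0 < n → q ^ n ≠ 1) (h : Sl2 q e f K L) {N : ℕ}
    (hN : ∀ n : ℤ, (N : ℤ) < n → ∀ v, K v = q ^ n • v → v = 0)
    (hN' : ∀ n : ℤ, (N : ℤ) < n → ∀ v, L v = q ^ n • v → v = 0)
    {W : Submodule ℂ V} (hWe : ∀ v ∈ W, e v ∈ W)
    (hs : ∀ n : ℕ, ∀ w ∈ W, K w = q ^ (n : ℤ) • w →
      ∃ w' ∈ W, K w' = q ^ (-n : ℤ) • w' ∧ (e ^ n) w' = w) (j : ℕ) :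
    ∀ n : ℕ, N < n + j → ∀ w ∈ W, (K w = q ^ (-n : ℤ) • w → f w ∈ W) ∧
      (K w = q ^ (n : ℤ) • w → f w ∈ W) := by
  have hWp : ∀ k : ℕ, ∀ v ∈ W, (e ^ k) v ∈ W := by
    intro k
    induction k with
    | zero => intro v hv; simpa using hv
    | succ k ih => intro v hv; rw [pow_succ, Module.End.mul_apply]; exact ih _ (hWe v hv)
  induction j with
  | zero =>
    intro n hn w _
    refine ⟨fun hw => ?_, fun hw => ?_⟩
    · have := wt_inv hq0 h.LK hw
      rw [neg_neg] at this
      rw [hN' n (by omega) w this, map_zero]; exact W.zero_mem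
    · rw [hN n (by omega) w hw, map_zero]; exact W.zero_mem
  | succ j ih =>
    intro n hn
    have hneg : ∀ w ∈ W, K w = q ^ (-n : ℤ) • w → f w ∈ W := by
      intro w hwW hw
      have hLw := wt_inv hq0 h.LK hw
      have h1 := h.swap.comm_pow hq0 hq hLw (n + 1)
      have h2 : (e ^ (n + 2)) (f w) ∈ W := by
        have h3 : f ((e ^ (n + 2)) w) ∈ W := by
          refine (ih (n + 4) (by omega) _ (hWp _ _ hwW)).2 ?_
          rw [wt_raise_pow hq0 h.Ke hw]
          congr 2; push_cast; ring
        rw [h1] at h3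
        exact (W.add_mem_iff_left (W.smul_mem _ (hWp _ _ hwW))).1 h3
      have hfw : K (f w) = q ^ (-(n + 2 : ℕ) : ℤ) • f w := by
        rw [wt_lower hq0 h.Kf hw]
        congr 2; push_cast; ring
      obtain ⟨w', hw'W, hw', hew⟩ := hs (n + 2) _ h2 (by
        rw [wt_raise_pow hq0 h.Ke hfw]
        congr 2; push_cast; ring)
      have h4 : f w - w' = 0 := by
        refine h.swap.f_pow_inj hq0 hq hN' (N + 1) (n + 2) (by omega) _ ?_ ?_
        · have := wt_inv hq0 h.LK hfw
          have h5 := wt_inv hq0 h.LK hw'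
          rw [neg_neg] at this h5
          rw [map_sub, this, h5, smul_sub]
        · rw [map_sub, hew, sub_self]
      rwa [sub_eq_zero.1 h4]
    intro w hwW
    refine ⟨hneg w hwW, fun hw => ?_⟩
    obtain ⟨w', hw'W, hw', rfl⟩ := hs n w hwW hw
    have hLw := wt_inv hq0 h.LK hw'
    rcases n with _ | n
    · simpa using hneg w' hw'W (by simpa using hw')
    · rw [h.swap.comm_pow hq0 hq hLw n]
      exact W.add_mem (hWp _ _ (hneg w' hw'W hw')) (W.smul_mem _ (hWp _ _ hw'W))

end Sl2

/-! ### Injectivity for generic `s` -/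

/-- If `Y^m` is injective on `U`, then `(s²X + Y)^m` is injective on `U` for all `s` outside a
finite set avoiding `0`: with `π` a projection onto `U` and `G` a left inverse of `Y^m` on `U`,
the determinant of `1 - π + G (s²X + Y)^m π` is a polynomial in `s` with value `1` at `s = 0`. -/
lemma exists_finset_inj [FiniteDimensional ℂ V] (X Y : Module.End ℂ V) (U : Submodule ℂ V) (m : ℕ)
    (hY : ∀ v ∈ U, (Y ^ m) v = 0 → v = 0) :
    ∃ Λ : Finset ℂ, (0 : ℂ) ∉ Λ ∧ ∀ s : ℂ, s ∉ Λ →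
      ∀ v ∈ U, ((s ^ 2 • X + Y) ^ m) v = 0 → v = 0 := by
  obtain ⟨π', hπ'⟩ := U.subtype.exists_leftInverse_of_injective U.ker_subtype
  obtain ⟨G', hG'⟩ := ((Y ^ m).comp U.subtype).exists_leftInverse_of_injective (by
    rw [LinearMap.ker_eq_bot']
    intro v hv
    exact Subtype.ext (hY v v.2 hv))
  let π : Module.End ℂ V := U.subtype.comp π'
  let G : Module.End ℂ V := U.subtype.comp G'
  have hπ : ∀ v ∈ U, π v = v := fun v hv =>
    congrArg Subtype.val (LinearMap.congr_fun hπ' ⟨v, hv⟩)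
  have hπU : ∀ v, π v ∈ U := fun v => (π' v).2
  have hG : ∀ v ∈ U, G ((Y ^ m) v) = v := fun v hv =>
    congrArg Subtype.val (LinearMap.congr_fun hG' ⟨v, hv⟩)
  let T : ℂ → Module.End ℂ V := fun s => 1 - π + G * (s ^ 2 • X + Y) ^ m * π
  let φ := LinearMap.toMatrixAlgEquiv (Module.finBasis ℂ V)
  let C : Matrix _ _ ℂ →+* Matrix _ _ (Polynomial ℂ) :=
    (Polynomial.C : ℂ →+* Polynomial ℂ).mapMatrix (m := Fin (Module.finrank ℂ V))
  let M : Matrix _ _ (Polynomial ℂ) :=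
    1 - C (φ π) + C (φ G) * ((Polynomial.X ^ 2 : Polynomial ℂ) • C (φ X) + C (φ Y)) ^ m * C (φ π)
  have hev : ∀ s : ℂ, M.det.eval s = LinearMap.det (T s) := by
    intro s
    have hC : ∀ A : Matrix _ _ ℂ, (Polynomial.evalRingHom s).mapMatrix (C A) = A := by
      intro A; ext i j; simp [C]
    have hX : (Polynomial.evalRingHom s).mapMatrix
        ((Polynomial.X ^ 2 : Polynomial ℂ) • C (φ X)) = s ^ 2 • φ X := by
      ext i j; simp [C]; ring
    rw [← Polynomial.coe_evalRingHom, RingHom.map_det,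
      ← LinearMap.det_toMatrix (Module.finBasis ℂ V)]
    congr 1
    change _ = φ (T s)
    simp only [M, T, map_add, map_sub, map_mul, map_pow, map_one, map_smul, hC, hX]
  have h0 : T 0 = 1 := by
    ext v
    simp [T, hG _ (hπU v)]
  have hne : M.det ≠ 0 := by
    intro h
    have := hev 0
    rw [h, h0] at this
    simp at this
  refine ⟨M.det.roots.toFinset, ?_, ?_⟩
  · rw [Multiset.mem_toFinset, Polynomial.mem_roots hne, Polynomial.IsRoot, hev, h0]
    simp
  · intro s hs v hv hv0
    rw [Multiset.mem_toFinset, Polynomial.mem_roots hne, Polynomial.IsRoot, hev] at hs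
    have hT : T s v = 0 := by simp [T, hπ v hv, hv0]
    have hu := LinearMap.isUnit_iff_ker_eq_bot (T s) |>.1
      ((LinearMap.isUnit_iff_isUnit_det _).2 (isUnit_iff_ne_zero.2 hs))
    exact (LinearMap.ker_eq_bot'.1 hu) v hT

/-! ### Weight space decomposition and dimension count -/

/-- The eigenvalues of `K₀` on a module of type `(1,1)` are among the `q^(2i-d)`. -/
lemma eigen_of_type {q : ℂ} {K0 : Module.End ℂ V} {d : ℕ}
    (hd : ⨆ i : Fin (d + 1), Module.End.eigenspace K0 (q ^ (2 * (i : ℤ) - d)) = ⊤)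
    (μ : ℂ) (v : V) (hv : v ∈ Module.End.eigenspace K0 μ) (hv0 : v ≠ 0) :
    ∃ i : Fin (d + 1), μ = q ^ (2 * (i : ℤ) - d) := by
  by_contra! hne
  have hi := Module.End.eigenspaces_iSupIndep K0 μ
  have htop : (⨆ j, ⨆ (_ : j ≠ μ), Module.End.eigenspace K0 j) = ⊤ := by
    rw [eq_top_iff, ← hd]
    refine iSup_le fun i => le_iSup₂_of_le (q ^ (2 * (i : ℤ) - d)) (hne i).symm le_rfl
  rw [htop, disjoint_top] at hi
  rw [hi] at hv
  exact hv0 (by simpa using hv)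

/-- If `f` maps every weight vector of `W` into `W`, then `W` is `f`-stable, because `W` is spanned
by its weight vectors. -/
lemma Sl2.f_stable [FiniteDimensional ℂ V] {q : ℂ} (hq0 : q ≠ 0) {e f K L : Module.End ℂ V}
    (h : Sl2 q e f K L) {d : ℕ}
    (hd : ⨆ i : Fin (d + 1), Module.End.eigenspace L (q ^ (2 * (i : ℤ) - d)) = ⊤)
    {W : Submodule ℂ V} (hWL : ∀ v ∈ W, L v ∈ W)
    (hf : ∀ n : ℤ, ∀ w ∈ W, K w = q ^ n • w → f w ∈ W) : ∀ w ∈ W, f w ∈ W := by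
  have htop : ⨆ μ, Module.End.eigenspace L μ = ⊤ := by
    rw [eq_top_iff, ← hd]
    exact iSup_le fun i => le_iSup_of_le _ le_rfl
  have hW := Submodule.eq_iSup_inf_genEigenspace (f := L) (k := 1) (p := W) hWL htop
  have : W ≤ W.comap f := by
    conv_lhs => rw [hW]
    refine iSup_le fun μ w hw => ?_
    by_cases hw0 : w = 0
    · simp [hw0]
    obtain ⟨i, rfl⟩ := eigen_of_type hd μ w hw.2 hw0
    exact hf _ w hw.1 (wt_inv hq0 h.KL (Module.End.mem_eigenspace_iff.1 hw.2))
  exact this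

/-- On weight vectors, `(fK)^m` is a nonzero multiple of `f^m`. -/
lemma mul_pow_wt {q : ℂ} (hq0 : q ≠ 0) {K f : Module.End ℂ V} (h : K * f = (q ^ 2)⁻¹ • (f * K))
    {n : ℤ} {v : V} (hv : K v = q ^ n • v) (k : ℕ) :
    ∃ c : ℂ, c ≠ 0 ∧ ((f * K) ^ k) v = c • (f ^ k) v := by
  induction k with
  | zero => exact ⟨1, one_ne_zero, by simp⟩
  | succ k ih =>
    obtain ⟨c, hc, hk⟩ := ih
    refine ⟨c * q ^ (n - 2 * k), mul_ne_zero hc (zpow_ne_zero _ hq0), ?_⟩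
    rw [pow_succ', Module.End.mul_apply, hk, map_smul, Module.End.mul_apply,
      wt_lower_pow hq0 h hv, map_smul, smul_smul, pow_succ', Module.End.mul_apply]

/-- A linear map `φ` between finite-dimensional subspaces `A` and `B` is onto if it is injective
and some other map embeds `B` into `A`. -/
lemma surj_of_inj_inj [FiniteDimensional ℂ V] {A B : Submodule ℂ V} {φ ψ : Module.End ℂ V}
    (hφ : ∀ v ∈ A, φ v ∈ B) (hψ : ∀ v ∈ B, ψ v ∈ A) (hφi : ∀ v ∈ A, φ v = 0 → v = 0)
    (hψi : ∀ v ∈ B, ψ v = 0 → v = 0) : ∀ w ∈ B, ∃ v ∈ A, φ v = w := by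
  have i1 : Function.Injective (φ.restrict hφ) := by
    rw [← LinearMap.ker_eq_bot, LinearMap.ker_eq_bot']
    exact fun v hv => Subtype.ext (hφi v v.2 (congrArg Subtype.val hv))
  have i2 : Function.Injective (ψ.restrict hψ) := by
    rw [← LinearMap.ker_eq_bot, LinearMap.ker_eq_bot']
    exact fun v hv => Subtype.ext (hψi v v.2 (congrArg Subtype.val hv))
  have hdim := le_antisymm (LinearMap.finrank_le_finrank_of_injective i1)
    (LinearMap.finrank_le_finrank_of_injective i2)
  intro w hw
  obtain ⟨v, hv⟩ := (LinearMap.injective_iff_surjective_of_finrank_eq_finrank hdim).1 i1 ⟨w, hw⟩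
  exact ⟨v, v.2, congrArg Subtype.val hv⟩

end Helpers

/-! ### Irreducibility for generic `s` -/

/-- for a finite-dimensional irreducible `U'_q(L(sl₂))`-module of type
`(1,1)`, there is a finite set `Λ ⊆ ℂ∖{0}` such that for all nonzero `s ∉ Λ` the only
subspaces invariant under `K₀`, `K₀⁻¹ = K₁`, `E₁⁺` and `E₀⁺ + s⁻² E₁⁻K₁` are `⊥` and `⊤`. -/
theorem stmt8 (q : ℂ) (hq0 : q ≠ 0) (hq : ∀ n : ℕ, 0 < n → q ^ n ≠ 1)
    {V : Type*} [AddCommGroup V] [Module ℂ V] [FiniteDimensional ℂ V]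
    (E0 E1p E1m K0 K1 : Module.End ℂ V) (h : IsUqpRep q E0 E1p E1m K0 K1)
    (hirr : IsIrred E0 E1p E1m K0 K1) (ht : IsType11 q K0) :
    ∃ Λ : Finset ℂ, (0 : ℂ) ∉ Λ ∧
      ∀ s : ℂ, s ≠ 0 → s ∉ Λ →
        ∀ W : Submodule ℂ V,
          (∀ v ∈ W, K0 v ∈ W) → (∀ v ∈ W, K1 v ∈ W) → (∀ v ∈ W, E1p v ∈ W) →
          (∀ v ∈ W, (E0 + (s ^ 2)⁻¹ • (E1m * K1)) v ∈ W) →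
          W = ⊥ ∨ W = ⊤ := by
  obtain ⟨d, hd⟩ := ht
  have hS : Sl2 q E1p E1m K1 K0 :=
    ⟨h.K1K0, h.K0K1, h.K1E1p, h.K1E1m, h.K0E1p, h.K0E1m, h.e1comm⟩
  have hN' : ∀ n : ℤ, (d : ℤ) < n → ∀ v, K0 v = q ^ n • v → v = 0 := by
    intro n hn v hv
    by_contra hv0
    obtain ⟨i, hi⟩ := eigen_of_type hd _ v (Module.End.mem_eigenspace_iff.2 hv) hv0
    have := zpow_inj_of hq0 hq hi
    omega
  have hN : ∀ n : ℤ, (d : ℤ) < n → ∀ v, K1 v = q ^ n • v → v = 0 := by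
    intro n hn v hv
    by_contra hv0
    obtain ⟨i, hi⟩ := eigen_of_type hd _ v
      (Module.End.mem_eigenspace_iff.2 (wt_inv hq0 h.K0K1 hv)) hv0
    have := zpow_inj_of hq0 hq hi
    omega
  have hB : ∀ m : ℕ, ∀ v ∈ Module.End.eigenspace K1 (q ^ (m : ℤ)),
      ((E1m * K1) ^ m) v = 0 → v = 0 := by
    intro m v hv hv0
    rw [Module.End.mem_eigenspace_iff] at hv
    obtain ⟨c, hc, hcv⟩ := mul_pow_wt hq0 h.K1E1m hv m
    rw [hv0, eq_comm, smul_eq_zero] at hcv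
    exact hS.f_pow_inj hq0 hq hN (d + 1) m (by omega) v hv (hcv.resolve_left hc)
  choose Λ hΛ0 hΛ using fun m : ℕ => exists_finset_inj E0 (E1m * K1) _ m (hB m)
  refine ⟨(Finset.range (d + 1)).biUnion Λ, by simp [hΛ0], ?_⟩
  intro s hs hsΛ W hW0 hW1 hWe hWA
  have hs2 : s ^ 2 ≠ 0 := pow_ne_zero _ hs
  set A : Module.End ℂ V := E0 + (s ^ 2)⁻¹ • (E1m * K1) with hA
  have hsA : s ^ 2 • A = s ^ 2 • E0 + E1m * K1 := by
    rw [hA, smul_add, smul_inv_smul₀ hs2]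
  have hKA : K1 * A = (q ^ 2)⁻¹ • (A * K1) := by
    rw [hA, mul_add, add_mul, smul_add, h.K1E0, mul_smul_comm, ← mul_assoc, h.K1E1m,
      smul_mul_assoc, smul_mul_assoc, smul_comm]
  have hAinj : ∀ m : ℕ, ∀ v, K1 v = q ^ (m : ℤ) • v → (A ^ m) v = 0 → v = 0 := by
    intro m v hv hv0
    by_cases hm : m < d + 1
    · refine hΛ m s (fun hmem => hsΛ ?_) v (Module.End.mem_eigenspace_iff.2 hv) ?_
      · exact Finset.mem_biUnion.2 ⟨m, Finset.mem_range.2 hm, hmem⟩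
      · rw [← hsA, smul_pow, LinearMap.smul_apply, hv0, smul_zero]
    · exact hN m (by omega) v hv
  have hpow : ∀ T : Module.End ℂ V, (∀ v ∈ W, T v ∈ W) → ∀ k : ℕ, ∀ v ∈ W, (T ^ k) v ∈ W := by
    intro T hT k
    induction k with
    | zero => intro v hv; simpa using hv
    | succ k ih => intro v hv; rw [pow_succ, Module.End.mul_apply]; exact ih _ (hT v hv)
  have hsurj : ∀ n : ℕ, ∀ w ∈ W, K1 w = q ^ (n : ℤ) • w →
      ∃ w' ∈ W, K1 w' = q ^ (-n : ℤ) • w' ∧ (E1p ^ n) w' = w := by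
    intro n w hwW hw
    obtain ⟨w', hw', hew⟩ := surj_of_inj_inj
      (A := W ⊓ Module.End.eigenspace K1 (q ^ (-n : ℤ)))
      (B := W ⊓ Module.End.eigenspace K1 (q ^ (n : ℤ))) (φ := E1p ^ n) (ψ := A ^ n)
      (fun v hv => ⟨hpow _ hWe _ _ hv.1, Module.End.mem_eigenspace_iff.2 (by
        rw [wt_raise_pow hq0 h.K1E1p (Module.End.mem_eigenspace_iff.1 hv.2)]
        congr 2; ring)⟩)
      (fun v hv => ⟨hpow _ hWA _ _ hv.1, Module.End.mem_eigenspace_iff.2 (by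
        rw [wt_lower_pow hq0 hKA (Module.End.mem_eigenspace_iff.1 hv.2)]
        congr 2; ring)⟩)
      (fun v hv hv0 => hS.swap.f_pow_inj hq0 hq hN' (d + 1) n (by omega) v (by
        simpa using wt_inv hq0 h.K0K1 (Module.End.mem_eigenspace_iff.1 hv.2)) hv0)
      (fun v hv hv0 => hAinj n v (Module.End.mem_eigenspace_iff.1 hv.2) hv0)
      w ⟨hwW, Module.End.mem_eigenspace_iff.2 hw⟩
    exact ⟨w', hw'.1, Module.End.mem_eigenspace_iff.1 hw'.2, hew⟩
  have hWf : ∀ w ∈ W, E1m w ∈ W := by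
    refine hS.f_stable hq0 hd hW0 fun n w hwW hw => ?_
    have key := hS.f_mem hq0 hq hN hN' hWe hsurj (d + 1) n.natAbs (by omega) w hwW
    rcases Int.natAbs_eq n with hn | hn
    · exact key.2 (by rwa [← hn])
    · exact key.1 (by rwa [← hn])
  refine hirr W (fun v hv => ?_) hWe hWf hW0 hW1
  have : E0 v = A v - (s ^ 2)⁻¹ • E1m (K1 v) := by simp [hA]
  rw [this]
  exact W.sub_mem (hWA v hv) (W.smul_mem _ (hWf _ (hW1 v hv)))

end
end
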